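/- Let {E_t}_{t≥1} be a stationary ergodic sequence of nonnegative random variables with mean λ, let P_S > 0, and define the battery process B_1 = 0, B_{t+1} = B_t - P_S·1_{B_t ≥ P_S} + E_t. Then the long-run transmission probability Ψ_S = lim_{n→∞} (1/n) Σ_{t=1}^n E[1_{B_t ≥ P_S}] exists and equals min(1, λ/P_S). -/

import Mathlib

/-!
By energy balance, the stored energy plus the threshold `p` times the number of transmissions
equals the initial level `b 0` plus the cumulative arrivals. If up to slot `n` the cumulative
arrivals stay within `R` of a line of slope `r`, an induction over the slots shows that the number
of transmissions is within `(|b 0| + R) / p + 2` of `n * max 0 (min 1 (r / p))`.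

Ergodicity provides, for every `ε > 0`, such an `R` with expectation at most `C + n * ε`, where `C`
does not depend on `n`. The range of `U - 1`, where `U` is the Koopman operator on `L²`, is dense
in the orthogonal complement of the constants, so an integrable `f` is `∫ f` plus the coboundary
of a bounded function plus a remainder with small `L¹` norm. The Birkhoff sums of the coboundary
telescope and those of the remainder are bounded, for all times up to `n` at once, by the Birkhoff
sum at time `n` of its absolute value. Integrating the pathwise estimate gives the limit.
-/

open MeasureTheory Filter

theorem mem_topologicalClosure_range_sub_one {𝕜 E : Type*} [RCLike 𝕜] [NormedAddCommGroup E]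
    [InnerProductSpace 𝕜 E] [CompleteSpace E] {U : E →L[𝕜] E} (hU : ‖U‖ ≤ 1) {x : E}
    (hx : ∀ y, U y = y → inner 𝕜 y x = 0) :
    x ∈ (U - 1).range.topologicalClosure := by
  rw [← Submodule.orthogonal_orthogonal_eq_closure]
  intro y hy
  have inner_U : ∀ z, inner 𝕜 (U z) y = inner 𝕜 z y := by
    simpa [Submodule.mem_orthogonal, inner_sub_left, sub_eq_zero] using hy
  refine hx y (eq_of_norm_le_re_inner_eq_norm_sq (𝕜 := 𝕜) ?_ ?_)
  · simpa using U.le_of_opNorm_le hU y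
  · simp [inner_U]

theorem exists_norm_sub_apply_sub_lt {𝕜 E ι : Type*} [RCLike 𝕜] [NormedAddCommGroup E]
    [InnerProductSpace 𝕜 E] [CompleteSpace E] {U : E →L[𝕜] E} (hU : ‖U‖ ≤ 1) {x : E}
    (hx : ∀ y, U y = y → inner 𝕜 y x = 0) {φ : ι → E} (hφ : DenseRange φ) {ε : ℝ} (hε : 0 < ε) :
    ∃ i, ‖x - (U (φ i) - φ i)‖ < ε := by
  let D : E →L[𝕜] E := U - 1
  have x_mem : x ∈ closure (Set.range (D ∘ φ)) := by
    rw [Set.range_comp]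
    exact closure_minimal (D.continuous.range_subset_closure_image_dense hφ) isClosed_closure
      (mem_topologicalClosure_range_sub_one hU hx)
  obtain ⟨_, ⟨i, rfl⟩, hi⟩ := Metric.mem_closure_iff.1 x_mem ε hε
  exact ⟨i, by simpa [D, dist_eq_norm] using hi⟩

theorem tendsto_div_natCast_of_forall_abs_sub_le {a : ℕ → ℝ} {r : ℝ}
    (h : ∀ ε > 0, ∃ C, ∀ n : ℕ, |a n - n * r| ≤ C + n * ε) :
    Tendsto (fun n : ℕ => a n / n) atTop (nhds r) := by
  rw [Metric.tendsto_atTop']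
  intro δ hδ
  obtain ⟨C, hC⟩ := h (δ / 2) (by positivity)
  obtain ⟨N, hN⟩ := exists_nat_gt (C / (δ / 2))
  refine ⟨N, fun n hn => ?_⟩
  have n_pos : (0 : ℝ) < n := by exact_mod_cast N.zero_le.trans_lt hn
  have C_lt : C < n * (δ / 2) := (div_lt_iff₀ (by positivity)).1 (hN.trans (by exact_mod_cast hn))
  have : a n / n - r = (a n - n * r) / n := by field_simp
  rw [Real.dist_eq, this, abs_div, abs_of_pos n_pos, div_lt_iff₀ n_pos]
  linarith [hC n]

section Integral

variable {Ω E : Type*} [MeasurableSpace Ω] {μ : Measure Ω} [NormedAddCommGroup E]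

theorem integral_comp_of_measurePreserving [NormedSpace ℝ E] {Ω' : Type*} [MeasurableSpace Ω']
    {ν : Measure Ω'} {T : Ω → Ω'} (hT : MeasurePreserving T μ ν) {f : Ω' → E}
    (hf : AEStronglyMeasurable f ν) : ∫ ω, f (T ω) ∂μ = ∫ ω, f ω ∂ν := by
  rw [← integral_map hT.aemeasurable (by rwa [hT.map_eq]), hT.map_eq]

theorem integral_norm_eq_toReal_eLpNorm_one {f : Ω → E} (hf : AEStronglyMeasurable f μ) :
    ∫ ω, ‖f ω‖ ∂μ = (eLpNorm f 1 μ).toReal := by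
  rw [toReal_eLpNorm hf, lpNorm_one_eq_integral_norm hf]

theorem integral_norm_le_norm_Lp [IsProbabilityMeasure μ] {p : ENNReal} (hp : 1 ≤ p)
    (f : Lp E p μ) : ∫ ω, ‖f ω‖ ∂μ ≤ ‖f‖ := by
  have hf := Lp.aestronglyMeasurable f
  rw [integral_norm_eq_toReal_eLpNorm_one hf, Lp.norm_def]
  exact ENNReal.toReal_mono (Lp.eLpNorm_ne_top f) (eLpNorm_le_eLpNorm_of_exponent_le hp hf)

theorem exists_simpleFunc_integral_norm_sub_lt {f : Ω → E} (hf : Integrable f μ) {ε : ℝ}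
    (hε : 0 < ε) : ∃ g : SimpleFunc Ω E, Integrable g μ ∧ ∫ ω, ‖f ω - g ω‖ ∂μ < ε := by
  obtain ⟨g, hfg, hg⟩ := (memLp_one_iff_integrable.2 hf).exists_simpleFunc_eLpNorm_sub_lt
    ENNReal.one_ne_top (ENNReal.ofReal_pos.2 hε).ne'
  rw [memLp_one_iff_integrable] at hg
  refine ⟨g, hg, ?_⟩
  have := integral_norm_eq_toReal_eLpNorm_one (hf.sub hg).aestronglyMeasurable
  simp only [Pi.sub_apply] at this
  rw [this]
  exact ENNReal.toReal_lt_of_lt_ofReal hfg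

end Integral

section Birkhoff

variable {Ω : Type*} {T : Ω → Ω}

/-- The coboundary `v ∘ T - v` of `v` over the transformation `T`. Coboundaries are the functions
whose Birkhoff sums telescope. -/
def coboundary {G : Type*} [Sub G] (T : Ω → Ω) (v : Ω → G) : Ω → G := v ∘ T - v

theorem birkhoffSum_coboundary {G : Type*} [AddCommGroup G] (v : Ω → G) (n : ℕ) (ω : Ω) :
    birkhoffSum T (coboundary T v) n ω = v (T^[n] ω) - v ω := by
  simp only [birkhoffSum, coboundary, Pi.sub_apply, Function.comp_apply,
    ← Function.iterate_succ_apply' T]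
  exact Finset.sum_range_sub (fun k => v (T^[k] ω)) n

theorem birkhoffSum_mono {f : Ω → ℝ} (hf : 0 ≤ f) (ω : Ω) :
    Monotone fun n => birkhoffSum T f n ω :=
  monotone_nat_of_le_succ fun n => by
    rw [birkhoffSum_succ]
    exact le_add_of_nonneg_right (hf _)

theorem abs_birkhoffSum_le (f : Ω → ℝ) (n : ℕ) (ω : Ω) :
    |birkhoffSum T f n ω| ≤ birkhoffSum T |f| n ω :=
  Finset.abs_sum_le_sum_abs _ _

variable [MeasurableSpace Ω] {μ : Measure Ω}

theorem integrable_birkhoffSum {E : Type*} [NormedAddCommGroup E] (hT : MeasurePreserving T μ μ)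
    {f : Ω → E} (hf : Integrable f μ) (n : ℕ) : Integrable (birkhoffSum T f n) μ :=
  integrable_finsetSum _ fun k _ => (hT.iterate k).integrable_comp_of_integrable hf

theorem integral_birkhoffSum {E : Type*} [NormedAddCommGroup E] [NormedSpace ℝ E]
    (hT : MeasurePreserving T μ μ) {f : Ω → E} (hf : Integrable f μ) (n : ℕ) :
    ∫ ω, birkhoffSum T f n ω ∂μ = n • ∫ ω, f ω ∂μ := by
  have integrable_iterate (k : ℕ) : Integrable (fun ω => f (T^[k] ω)) μ :=
    (hT.iterate k).integrable_comp_of_integrable hf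
  simp only [birkhoffSum, integral_finsetSum _ fun k _ => integrable_iterate k,
    integral_comp_of_measurePreserving (hT.iterate _) hf.aestronglyMeasurable,
    Finset.sum_const, Finset.card_range]

theorem integrable_coboundary {E : Type*} [NormedAddCommGroup E] (hT : MeasurePreserving T μ μ)
    {v : Ω → E} (hv : Integrable v μ) : Integrable (coboundary T v) μ :=
  (hT.integrable_comp_of_integrable hv).sub hv

theorem inner_eq_zero_of_compMeasurePreserving_eq_self (hT : Ergodic T μ) {x y : Lp ℝ 2 μ}
    (hx : ∫ ω, x ω ∂μ = 0) (hy : Lp.compMeasurePreserving T hT.toMeasurePreserving y = y) :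
    inner ℝ y x = 0 := by
  have y_comp : (y : Ω → ℝ) ∘ T =ᵐ[μ] y := by
    simpa only [hy] using (Lp.coeFn_compMeasurePreserving y hT.toMeasurePreserving).symm
  obtain ⟨c, hc⟩ := hT.ae_eq_const_of_ae_eq_comp_ae (Lp.aestronglyMeasurable y) y_comp
  calc inner ℝ y x = ∫ ω, x ω * c ∂μ := by
        rw [L2.inner_def]
        refine integral_congr_ae ?_
        filter_upwards [hc] with ω hω
        simp [hω]
    _ = 0 := by rw [integral_mul_const, hx, zero_mul]

theorem exists_simpleFunc_norm_sub_compMeasurePreserving_sub_lt (hT : Ergodic T μ) {x : Lp ℝ 2 μ}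
    (hx : ∫ ω, x ω ∂μ = 0) {ε : ℝ} (hε : 0 < ε) :
    ∃ v : Lp.simpleFunc ℝ 2 μ,
      ‖x - (Lp.compMeasurePreserving T hT.toMeasurePreserving (v : Lp ℝ 2 μ) - v)‖ < ε := by
  let U : Lp ℝ 2 μ →L[ℝ] Lp ℝ 2 μ :=
    (Lp.compMeasurePreservingₗᵢ ℝ T hT.toMeasurePreserving).toContinuousLinearMap
  have norm_U_le : ‖U‖ ≤ 1 := LinearIsometry.norm_toContinuousLinearMap_le _
  have inner_eq_zero (y : Lp ℝ 2 μ) (hy : U y = y) : inner ℝ y x = 0 :=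
    inner_eq_zero_of_compMeasurePreserving_eq_self hT hx hy
  exact exists_norm_sub_apply_sub_lt (U := U) norm_U_le inner_eq_zero
    (Lp.simpleFunc.denseRange ENNReal.ofNat_ne_top) hε

theorem coeFn_compMeasurePreserving_sub_ae_eq_coboundary {E : Type*} [NormedAddCommGroup E]
    {p : ENNReal} (hT : MeasurePreserving T μ μ) (v : Lp.simpleFunc E p μ) :
    (Lp.compMeasurePreserving T hT (v : Lp E p μ) - v : Lp E p μ) =ᵐ[μ]
      coboundary T (Lp.simpleFunc.toSimpleFunc v) := by
  have v_eq := Lp.simpleFunc.toSimpleFunc_eq_toFun v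
  have v_comp := hT.quasiMeasurePreserving.ae_eq_comp v_eq
  exact (Lp.coeFn_sub _ _).trans <|
    ((Lp.coeFn_compMeasurePreserving _ hT).trans v_comp.symm).sub v_eq.symm

variable [IsProbabilityMeasure μ]

theorem exists_simpleFunc_integral_abs_sub_coboundary_lt_of_memLp_two (hT : Ergodic T μ)
    {g : Ω → ℝ} (hg : MemLp g 2 μ) (hg0 : ∫ ω, g ω ∂μ = 0) {ε : ℝ} (hε : 0 < ε) :
    ∃ v : SimpleFunc Ω ℝ, ∫ ω, |g ω - coboundary T v ω| ∂μ < ε := by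
  obtain ⟨v, hv⟩ := exists_simpleFunc_norm_sub_compMeasurePreserving_sub_lt hT
    (x := hg.toLp g) (by rwa [integral_congr_ae hg.coeFn_toLp]) hε
  refine ⟨Lp.simpleFunc.toSimpleFunc v, ((integral_congr_ae ?_).trans_le
    (integral_norm_le_norm_Lp one_le_two _)).trans_lt hv⟩
  filter_upwards [Lp.coeFn_sub (hg.toLp g) _, hg.coeFn_toLp,
    coeFn_compMeasurePreserving_sub_ae_eq_coboundary hT.toMeasurePreserving v]
    with ω h_sub h_g h_cob
  rw [h_sub, Pi.sub_apply, h_g, h_cob, Real.norm_eq_abs]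

theorem exists_simpleFunc_integral_abs_sub_coboundary_lt (hT : Ergodic T μ)
    {f : Ω → ℝ} (hf : Integrable f μ) {ε : ℝ} (hε : 0 < ε) :
    ∃ v : SimpleFunc Ω ℝ, ∫ ω, |f ω - ∫ x, f x ∂μ - coboundary T v ω| ∂μ < ε := by
  obtain ⟨g, hg, hfg⟩ := exists_simpleFunc_integral_norm_sub_lt hf (ε := ε / 3) (by positivity)
  set a := ∫ ω, f ω ∂μ
  set c := ∫ ω, g ω ∂μ
  obtain ⟨v, hv⟩ := exists_simpleFunc_integral_abs_sub_coboundary_lt_of_memLp_two hT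
    ((g.memLp_of_isFiniteMeasure 2 μ).sub (memLp_const c))
    (by simp [integral_sub hg (integrable_const c), c]) (ε := ε / 3) (by positivity)
  refine ⟨v, ?_⟩
  have abs_c_sub_a : |c - a| ≤ ∫ ω, |f ω - g ω| ∂μ := by
    rw [abs_sub_comm, ← integral_sub hf hg]
    exact abs_integral_le_integral_abs
  have hfg_int : Integrable (fun ω => |f ω - g ω|) μ := (hf.sub hg).abs
  have hgv_int : Integrable (fun ω => |g ω - c - coboundary T v ω|) μ :=
    ((hg.sub (integrable_const c)).sub
      (integrable_coboundary hT.toMeasurePreserving v.integrable_of_isFiniteMeasure)).abs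
  have sum_int : Integrable (fun ω => |f ω - g ω| + |g ω - c - coboundary T v ω|) μ :=
    hfg_int.add hgv_int
  calc ∫ ω, |f ω - a - coboundary T v ω| ∂μ
      ≤ ∫ ω, (|f ω - g ω| + |g ω - c - coboundary T v ω| + |c - a|) ∂μ := by
        refine integral_mono_of_nonneg (.of_forall fun _ => abs_nonneg _)
          (sum_int.add (integrable_const _)) (.of_forall fun ω => ?_)
        refine le_of_eq_of_le (congrArg abs ?_)
          (abs_add_three (f ω - g ω) (g ω - c - coboundary T v ω) (c - a))
        ring
    _ = ∫ ω, |f ω - g ω| ∂μ + ∫ ω, |g ω - c - coboundary T v ω| ∂μ + |c - a| := by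
        rw [integral_add sum_int (integrable_const _), integral_add hfg_int hgv_int]
        simp
    _ < ε := by
        simp only [Real.norm_eq_abs] at hfg
        simp only [Pi.sub_apply] at hv
        linarith

theorem exists_abs_birkhoffSum_sub_le (hT : Ergodic T μ) {f : Ω → ℝ} (hf : Integrable f μ)
    {ε : ℝ} (hε : 0 < ε) :
    ∃ C : ℝ, ∃ h : Ω → ℝ, 0 ≤ h ∧ Integrable h μ ∧ ∫ ω, h ω ∂μ < ε ∧
      ∀ n ω, |birkhoffSum T f n ω - n * ∫ x, f x ∂μ| ≤ C + birkhoffSum T h n ω := by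
  obtain ⟨v, hv⟩ := exists_simpleFunc_integral_abs_sub_coboundary_lt hT hf hε
  obtain ⟨K, hK⟩ := v.exists_forall_norm_le
  set a := ∫ x, f x ∂μ
  set r : Ω → ℝ := f - (fun _ => a) - coboundary T v
  have r_int : Integrable r μ := (hf.sub (integrable_const a)).sub
    (integrable_coboundary hT.toMeasurePreserving v.integrable_of_isFiniteMeasure)
  refine ⟨2 * K, |r|, abs_nonneg r, r_int.abs, hv, fun n ω => ?_⟩
  have split : birkhoffSum T f n ω - n * a = (v (T^[n] ω) - v ω) + birkhoffSum T r n ω := by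
    rw [birkhoffSum_sub, birkhoffSum_sub, birkhoffSum_coboundary,
      birkhoffSum_of_comp_eq (f := T) (φ := fun _ => a) rfl]
    simp
  have v_diff : |v (T^[n] ω) - v ω| ≤ 2 * K := by
    rw [two_mul]
    exact (norm_sub_le _ _).trans (add_le_add (hK _) (hK _))
  rw [split]
  exact (abs_add_le _ _).trans (add_le_add v_diff (abs_birkhoffSum_le r n ω))

end Birkhoff

section Battery

/-- `b` is the energy level of an infinite battery which receives the energy `e t` in slot `t` and
spends `p` in each slot that starts with at least `p` in store. The initial level `b 0` is
arbitrary. -/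
def IsBatteryPath (p : ℝ) (e b : ℕ → ℝ) : Prop :=
  ∀ t, b (t + 1) = b t - (if p ≤ b t then p else 0) + e t

/-- The number of transmissions in the slots `0, …, n - 1`, one for each slot in which the level
reaches the threshold `p`. It is real-valued because it is compared with energies and averaged. -/
noncomputable def transmissionCount (p : ℝ) (b : ℕ → ℝ) (n : ℕ) : ℝ :=
  ∑ t ∈ Finset.range n, if p ≤ b t then 1 else 0

variable {p : ℝ} {e b : ℕ → ℝ}

theorem transmissionCount_succ_of_le {n : ℕ} (h : p ≤ b n) :
    transmissionCount p b (n + 1) = transmissionCount p b n + 1 := by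
  rw [transmissionCount, Finset.sum_range_succ, if_pos h, transmissionCount]

theorem transmissionCount_succ_of_lt {n : ℕ} (h : b n < p) :
    transmissionCount p b (n + 1) = transmissionCount p b n := by
  rw [transmissionCount, Finset.sum_range_succ, if_neg h.not_ge, add_zero, transmissionCount]

theorem transmissionCount_nonneg (n : ℕ) : 0 ≤ transmissionCount p b n :=
  Finset.sum_nonneg fun _ _ => by split_ifs <;> norm_num

theorem transmissionCount_le (n : ℕ) : transmissionCount p b n ≤ n :=
  (Finset.sum_le_sum fun _ _ => by split_ifs <;> norm_num).trans_eq
    (by simp : ∑ _t ∈ Finset.range n, (1 : ℝ) = n)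

theorem IsBatteryPath.level_add_spent (hb : IsBatteryPath p e b) (n : ℕ) :
    b n + p * transmissionCount p b n = b 0 + ∑ t ∈ Finset.range n, e t := by
  induction n with
  | zero => simp [transmissionCount]
  | succ n ih =>
    rw [hb n, Finset.sum_range_succ]
    rcases le_or_gt p (b n) with h | h
    · rw [if_pos h, transmissionCount_succ_of_le h]
      linarith
    · rw [if_neg h.not_ge, transmissionCount_succ_of_lt h]
      linarith

variable {r R : ℝ} {n : ℕ}

-- A slot that transmits starts with at least `p` in store, so there the energy balance bounds the
-- spent energy by the arrivals; an idle slot leaves the count unchanged while the bound grows.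
-- In `le_spent` the two kinds of slots change roles.
theorem IsBatteryPath.spent_le (hb : IsBatteryPath p e b)
    (hR : ∀ k ≤ n, |∑ t ∈ Finset.range k, e t - k * r| ≤ R) :
    p * transmissionCount p b n ≤ n * max 0 r + (|b 0| + R) := by
  induction n with
  | zero =>
    have R_nonneg : 0 ≤ R := (abs_nonneg _).trans (hR 0 le_rfl)
    simpa [transmissionCount] using add_nonneg (abs_nonneg (b 0)) R_nonneg
  | succ n ih =>
    push_cast
    have max_nonneg : 0 ≤ max 0 r := le_max_left 0 r
    rcases le_or_gt p (b n) with h | h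
    · have energy_le : ∑ t ∈ Finset.range n, e t ≤ n * max 0 r + R := by
        have := mul_le_mul_of_nonneg_left (le_max_right 0 r) n.cast_nonneg
        linarith [le_of_abs_le (hR n n.le_succ)]
      rw [transmissionCount_succ_of_le h]
      linarith [hb.level_add_spent n, le_abs_self (b 0)]
    · rw [transmissionCount_succ_of_lt h]
      linarith [ih fun k hk => hR k (hk.trans n.le_succ)]

theorem IsBatteryPath.le_spent (hb : IsBatteryPath p e b) (hp : 0 ≤ p)
    (hR : ∀ k ≤ n, |∑ t ∈ Finset.range k, e t - k * r| ≤ R) :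
    n * min p r ≤ p * transmissionCount p b n + (|b 0| + R + 2 * p) := by
  induction n with
  | zero =>
    have R_nonneg : 0 ≤ R := (abs_nonneg _).trans (hR 0 le_rfl)
    simp only [transmissionCount, Finset.range_zero, Finset.sum_empty, Nat.cast_zero, zero_mul,
      mul_zero, zero_add]
    positivity
  | succ n ih =>
    push_cast
    have min_le : min p r ≤ p := min_le_left p r
    rcases le_or_gt p (b n) with h | h
    · rw [transmissionCount_succ_of_le h]
      linarith [ih fun k hk => hR k (hk.trans n.le_succ)]
    · have le_energy : n * min p r - R ≤ ∑ t ∈ Finset.range n, e t := by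
        have := mul_le_mul_of_nonneg_left (min_le_right p r) n.cast_nonneg
        linarith [neg_le_of_abs_le (hR n n.le_succ)]
      rw [transmissionCount_succ_of_lt h]
      linarith [hb.level_add_spent n, neg_abs_le (b 0)]

theorem IsBatteryPath.abs_transmissionCount_sub_le (hb : IsBatteryPath p e b) (hp : 0 < p)
    (hR : ∀ k ≤ n, |∑ t ∈ Finset.range k, e t - k * r| ≤ R) :
    |transmissionCount p b n - n * max 0 (min 1 (r / p))| ≤ (|b 0| + R) / p + 2 := by
  set A := transmissionCount p b n
  have R_nonneg : 0 ≤ R := (abs_nonneg _).trans (hR 0 n.zero_le)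
  have error_nonneg : 0 ≤ (|b 0| + R) / p := by positivity
  have lower : n * min 1 (r / p) ≤ A + ((|b 0| + R) / p + 2) := by
    have : p * min 1 (r / p) = min p r := by
      rw [mul_min_of_nonneg _ _ hp.le, mul_one, mul_div_cancel₀ _ hp.ne']
    refine le_of_mul_le_mul_left ?_ hp
    calc p * (n * min 1 (r / p)) = n * min p r := by rw [← this]; ring
      _ ≤ p * A + (|b 0| + R + 2 * p) := hb.le_spent hp.le hR
      _ = p * (A + ((|b 0| + R) / p + 2)) := by field_simp
  have upper : A ≤ n * max 0 (r / p) + (|b 0| + R) / p := by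
    have : p * max 0 (r / p) = max 0 r := by
      rw [mul_max_of_nonneg _ _ hp.le, mul_zero, mul_div_cancel₀ _ hp.ne']
    refine le_of_mul_le_mul_left ?_ hp
    calc p * A ≤ n * max 0 r + (|b 0| + R) := hb.spent_le hR
      _ = p * (n * max 0 (r / p) + (|b 0| + R) / p) := by rw [← this]; field_simp
  have A_nonneg : 0 ≤ A := transmissionCount_nonneg n
  have A_le : A ≤ n := transmissionCount_le n
  rw [abs_sub_le_iff]
  constructor
  · rw [max_min_distrib_left, max_eq_right zero_le_one]
    rcases min_choice 1 (max 0 (r / p)) with h | h <;> rw [h] <;> linarith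
  · rcases max_choice 0 (min 1 (r / p)) with h | h <;> rw [h] <;> linarith

end Battery

section ErgodicBattery

variable {Ω : Type*} [MeasurableSpace Ω] {μ : Measure Ω} {T : Ω → Ω} {f : Ω → ℝ} {p : ℝ}
  {B : ℕ → Ω → ℝ}

theorem aemeasurable_level (hT : MeasurePreserving T μ μ) (hf : AEMeasurable f μ)
    (hB0 : AEMeasurable (B 0) μ) (hB : ∀ ω, IsBatteryPath p (fun t => f (T^[t] ω)) (B · ω))
    (n : ℕ) : AEMeasurable (B n) μ := by
  induction n with
  | zero => exact hB0
  | succ n ih =>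
    have spend_meas : Measurable fun x : ℝ => if p ≤ x then p else 0 :=
      Measurable.ite measurableSet_Ici measurable_const measurable_const
    rw [show B (n + 1) = _ from funext fun ω => hB ω n]
    exact (ih.sub (spend_meas.comp_aemeasurable ih)).add
      (hf.comp_quasiMeasurePreserving (hT.iterate n).quasiMeasurePreserving)

theorem integrable_transmission [IsFiniteMeasure μ] {X : Ω → ℝ} (hX : AEMeasurable X μ) :
    Integrable (fun ω => if p ≤ X ω then (1 : ℝ) else 0) μ := by
  have meas : Measurable fun x : ℝ => if p ≤ x then (1 : ℝ) else 0 :=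
    Measurable.ite measurableSet_Ici measurable_const measurable_const
  refine .of_bound (meas.comp_aemeasurable hX).aestronglyMeasurable 1 (.of_forall fun ω => ?_)
  split_ifs <;> simp

theorem tendsto_integral_transmissionCount_div [IsProbabilityMeasure μ] (hT : Ergodic T μ)
    (hf : Integrable f μ) (hp : 0 < p) (hB0 : Integrable (B 0) μ)
    (hB : ∀ ω, IsBatteryPath p (fun t => f (T^[t] ω)) (B · ω)) :
    Tendsto (fun n : ℕ => (∫ ω, transmissionCount p (B · ω) n ∂μ) / n) atTop
      (nhds (max 0 (min 1 ((∫ ω, f ω ∂μ) / p)))) := by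
  set r := ∫ ω, f ω ∂μ
  have hP := hT.toMeasurePreserving
  refine tendsto_div_natCast_of_forall_abs_sub_le fun ε hε => ?_
  obtain ⟨C, h, h_nonneg, h_int, h_lt, h_bound⟩ :=
    exists_abs_birkhoffSum_sub_le hT hf (mul_pos hp hε)
  refine ⟨(∫ ω, |B 0 ω| ∂μ + C) / p + 2, fun n => ?_⟩
  have pathwise (ω : Ω) : |transmissionCount p (B · ω) n - n * max 0 (min 1 (r / p))| ≤
      (|B 0 ω| + (C + birkhoffSum T h n ω)) / p + 2 :=
    (hB ω).abs_transmissionCount_sub_le hp fun k hk =>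
      (h_bound k ω).trans (add_le_add_right (birkhoffSum_mono h_nonneg ω hk) C)
  have count_int : Integrable (fun ω => transmissionCount p (B · ω) n) μ :=
    integrable_finsetSum _ fun t _ => integrable_transmission
      (aemeasurable_level hP hf.aemeasurable hB0.aemeasurable hB t)
  have noise_int : Integrable (fun ω => C + birkhoffSum T h n ω) μ :=
    (integrable_const C).add (integrable_birkhoffSum hP h_int n)
  have bound_int : Integrable (fun ω => |B 0 ω| + (C + birkhoffSum T h n ω)) μ :=
    hB0.abs.add noise_int
  calc |∫ ω, transmissionCount p (B · ω) n ∂μ - n * max 0 (min 1 (r / p))|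
      = |∫ ω, (transmissionCount p (B · ω) n - n * max 0 (min 1 (r / p))) ∂μ| := by
        rw [integral_sub count_int (integrable_const _)]
        simp
    _ ≤ ∫ ω, ((|B 0 ω| + (C + birkhoffSum T h n ω)) / p + 2) ∂μ :=
        (Real.norm_eq_abs _).symm.trans_le <| norm_integral_le_of_norm_le
          ((bound_int.div_const p).add (integrable_const 2)) (.of_forall pathwise)
    _ = (∫ ω, |B 0 ω| ∂μ + C) / p + 2 + n * ((∫ ω, h ω ∂μ) / p) := by
        rw [integral_add (bound_int.div_const p) (integrable_const 2), integral_div,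
          integral_add hB0.abs noise_int,
          integral_add (integrable_const C) (integrable_birkhoffSum hP h_int n),
          integral_birkhoffSum hP h_int]
        simp only [integral_const, probReal_univ, one_smul, nsmul_eq_mul]
        ring
    _ ≤ (∫ ω, |B 0 ω| ∂μ + C) / p + 2 + n * ε := by
        gcongr
        exact (div_le_iff₀' hp).2 h_lt.le

end ErgodicBattery

theorem stmt5_general {Ω : Type*} [MeasurableSpace Ω] (μ : Measure Ω)
    [IsProbabilityMeasure μ]
    (T : Ω → Ω) (hT : Ergodic T μ)
    (E0 : Ω → ℝ) (hE0int : Integrable E0 μ)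
    (lam : ℝ) (hlam : ∫ ω, E0 ω ∂μ = lam)
    (PS : ℝ) (hPS : 0 < PS)
    (B : ℕ → Ω → ℝ)
    (hB1 : Integrable (B 1) μ)
    (hBrec : ∀ t, 1 ≤ t → ∀ ω,
      B (t + 1) ω = B t ω - (if PS ≤ B t ω then PS else 0) + E0 (T^[t] ω)) :
    Tendsto
      (fun n : ℕ => (1 / (n : ℝ)) * ∑ t ∈ Finset.Icc 1 n,
        ∫ ω, (if PS ≤ B t ω then (1 : ℝ) else 0) ∂μ)
      atTop (nhds (max 0 (min 1 (lam / PS)))) := by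
  have hP := hT.toMeasurePreserving
  -- Slots are renumbered from `0`, which makes `E0 ∘ T` the arrival of the first slot.
  have path (ω : Ω) : IsBatteryPath PS (fun t => (E0 ∘ T) (T^[t] ω)) (fun t => B (t + 1) ω) :=
    fun t => by
      simp only [hBrec (t + 1) t.succ_pos, Function.iterate_succ_apply', Function.comp_apply]
  have level_meas := aemeasurable_level hP
    (hE0int.aemeasurable.comp_quasiMeasurePreserving hP.quasiMeasurePreserving)
    hB1.aemeasurable path
  have limit := tendsto_integral_transmissionCount_div hT
    (hP.integrable_comp_of_integrable hE0int) hPS hB1 path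
  simp only [Function.comp_apply,
    integral_comp_of_measurePreserving hP hE0int.aestronglyMeasurable, hlam] at limit
  refine limit.congr fun n => ?_
  simp only [transmissionCount]
  rw [integral_finsetSum _ fun t _ => integrable_transmission (level_meas t),
    Finset.range_eq_Ico, Finset.sum_Ico_add' (fun t => ∫ ω, if PS ≤ B t ω then (1 : ℝ) else 0 ∂μ),
    one_div_mul_eq_div]
  rfl

/-- For a stationary ergodic nonnegative energy arrival process
E_t = E0 ∘ T^t with mean λ, and battery B_1 = 0,
B_{t+1} = B_t - P_S·1_{B_t ≥ P_S} + E_t, the long-run transmission probability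
lim (1/n) ∑_{t=1}^n E[1_{B_t ≥ P_S}] exists and equals min(1, λ/P_S). -/
theorem stmt5 {Ω : Type*} [MeasurableSpace Ω] (μ : Measure Ω)
    [IsProbabilityMeasure μ]
    (T : Ω → Ω) (hT : Ergodic T μ)
    (E0 : Ω → ℝ) (hE0meas : Measurable E0) (hE0nonneg : ∀ ω, 0 ≤ E0 ω)
    (hE0int : Integrable E0 μ)
    (lam : ℝ) (hlam : ∫ ω, E0 ω ∂μ = lam)
    (PS : ℝ) (hPS : 0 < PS)
    (B : ℕ → Ω → ℝ)
    (hB1 : ∀ ω, B 1 ω = 0)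
    (hBrec : ∀ t, 1 ≤ t → ∀ ω,
      B (t + 1) ω = B t ω - (if PS ≤ B t ω then PS else 0) + E0 (T^[t] ω)) :
    Tendsto
      (fun n : ℕ => (1 / (n : ℝ)) * ∑ t ∈ Finset.Icc 1 n,
        ∫ ω, (if PS ≤ B t ω then (1 : ℝ) else 0) ∂μ)
      atTop (nhds (min 1 (lam / PS))) := by
  have lam_nonneg : 0 ≤ lam := hlam ▸ integral_nonneg hE0nonneg
  simpa [show 0 ≤ lam / PS by positivity] using stmt5_general μ T hT E0 hE0int lam hlam PS hPS B
    (by simp [funext hB1]) hBrec
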